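/- If R is a semilocal ring, then R is right small dual if and only if R is right dual, i.e., if rl(I) = I for every small right ideal I of R then rl(T) = T for every right ideal T of R. -/

import Mathlib

open Pointwise

/-- The left annihilator `l(X) = {r : ∀ x ∈ X, r * x = 0}` of a subset of a ring. -/
def lAnn (R : Type*) [Ring R] (X : Set R) : Set R := {r : R | ∀ x ∈ X, r * x = 0}

/-- The right annihilator `r(X) = {r : ∀ x ∈ X, x * r = 0}` of a subset of a ring. -/
def rAnn (R : Type*) [Ring R] (X : Set R) : Set R := {r : R | ∀ x ∈ X, x * r = 0}

/-- A right ideal of `R` (a submodule of `R` as a right `R`-module, i.e. an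
`Rᵐᵒᵖ`-submodule) is small if `I + K ≠ R` for every proper right ideal `K`. -/
def IsSmallRightIdeal (R : Type*) [Ring R] (I : Submodule Rᵐᵒᵖ R) : Prop :=
  ∀ K : Submodule Rᵐᵒᵖ R, K ≠ ⊤ → I ⊔ K ≠ ⊤

/-- A left ideal of `R` is small if `I + K ≠ R` for every proper left ideal `K`. -/
def IsSmallLeftIdeal (R : Type*) [Ring R] (I : Ideal R) : Prop :=
  ∀ K : Ideal R, K ≠ ⊤ → I ⊔ K ≠ ⊤

/-- `R` is right small dual if `rl(I) = I` for every small right ideal `I`. -/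
def IsRightSmallDual (R : Type*) [Ring R] : Prop :=
  ∀ I : Submodule Rᵐᵒᵖ R, IsSmallRightIdeal R I → rAnn R (lAnn R (I : Set R)) = (I : Set R)

/-- `R` is left small dual if `lr(I) = I` for every small left ideal `I`. -/
def IsLeftSmallDual (R : Type*) [Ring R] : Prop :=
  ∀ I : Ideal R, IsSmallLeftIdeal R I → lAnn R (rAnn R (I : Set R)) = (I : Set R)

/-- `R` is right dual if `rl(I) = I` for every right ideal `I`. -/
def IsRightDual (R : Type*) [Ring R] : Prop :=
  ∀ I : Submodule Rᵐᵒᵖ R, rAnn R (lAnn R (I : Set R)) = (I : Set R)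

/-- `R` is left dual if `lr(I) = I` for every left ideal `I`. -/
def IsLeftDual (R : Type*) [Ring R] : Prop :=
  ∀ I : Ideal R, lAnn R (rAnn R (I : Set R)) = (I : Set R)

/-- A right `R`-module is torsionless if its nonzero elements are separated by
right `R`-linear maps to `R`. -/
def IsTorsionlessRight (R : Type*) [Ring R] (M : Type*) [AddCommGroup M] [Module Rᵐᵒᵖ M] : Prop :=
  ∀ m : M, m ≠ 0 → ∃ f : M →ₗ[Rᵐᵒᵖ] R, f m ≠ 0

/-- The left annihilator of a subset, as a left ideal. -/
def lAnnIdeal (R : Type*) [Ring R] (X : Set R) : Ideal R where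
  carrier := {r : R | ∀ x ∈ X, r * x = 0}
  add_mem' := fun {a b} ha hb x hx => by rw [add_mul, ha x hx, hb x hx, add_zero]
  zero_mem' := fun x _ => zero_mul x
  smul_mem' := fun c a ha x hx => by
    simp only [smul_eq_mul, Set.mem_setOf_eq] at *
    rw [mul_assoc, ha x hx, mul_zero]

/-- A right ideal `I` has a weak supplement if there is a right ideal `K` with
`I + K = R` and `I ∩ K` small. -/
def HasWeakSupplementRight (R : Type*) [Ring R] (I : Submodule Rᵐᵒᵖ R) : Prop :=
  ∃ K : Submodule Rᵐᵒᵖ R, I ⊔ K = ⊤ ∧ IsSmallRightIdeal R (I ⊓ K)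

/-- A left ideal `I` has a weak supplement if there is a left ideal `K` with
`I + K = R` and `I ∩ K` small. -/
def HasWeakSupplementLeft (R : Type*) [Ring R] (I : Ideal R) : Prop :=
  ∃ K : Ideal R, I ⊔ K = ⊤ ∧ IsSmallLeftIdeal R (I ⊓ K)

/-- `R` is semilocal if `R/J(R)` is a semisimple ring (equivalently, a semisimple
left `R`-module). -/
def IsSemilocalRing (R : Type*) [Ring R] : Prop :=
  IsSemisimpleModule R (R ⧸ Ideal.jacobson (⊥ : Ideal R))

/-- `R` is semiperfect if it is semilocal and idempotents lift modulo `J(R)`. -/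
def IsSemiperfectRing (R : Type*) [Ring R] : Prop :=
  IsSemilocalRing R ∧
    ∀ a : R, a * a - a ∈ Ideal.jacobson (⊥ : Ideal R) →
      ∃ e : R, e * e = e ∧ e - a ∈ Ideal.jacobson (⊥ : Ideal R)

/-- `R` is `J`-regular if `R/J(R)` is von Neumann regular. -/
def IsJRegular (R : Type*) [Ring R] : Prop :=
  ∀ a : R, ∃ b : R, a * b * a - a ∈ Ideal.jacobson (⊥ : Ideal R)

/-- `R` is left perfect: `R/J(R)` is semisimple and `J(R)` is left T-nilpotent. -/
def IsLeftPerfect (R : Type*) [Ring R] : Prop :=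
  IsSemilocalRing R ∧
    ∀ a : ℕ → R, (∀ i, a i ∈ Ideal.jacobson (⊥ : Ideal R)) →
      ∃ n : ℕ, (List.ofFn fun i : Fin (n + 1) => a i).prod = 0

/-- A right ideal `E` is essential if `E ∩ T ≠ 0` for every nonzero right ideal `T`. -/
def IsEssentialRightIdeal (R : Type*) [Ring R] (E : Submodule Rᵐᵒᵖ R) : Prop :=
  ∀ T : Submodule Rᵐᵒᵖ R, T ≠ ⊥ → E ⊓ T ≠ ⊥

/-!
Let `T` be a right ideal with a weak supplement `K`, and write `1 = t + k` with `t ∈ T`, `k ∈ K`.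
Left multiplication by `k = 1 - t` maps `T` into `T ∩ K`, hence `rl(T)` into `rl(T ∩ K)`, so
`x = t * x + k * x` gives `rl(T) ⊆ T + rl(T ∩ K)`. As `T ∩ K` is small, `rl(T ∩ K) = T ∩ K ⊆ T`
in a right small dual ring, and so `rl(T) = T`.

Over a semilocal ring weak supplements exist: pull a complement of the image of `T` in the
semisimple ring `R/J(R)` back to `R`. It meets `T` inside `J(R)`, and right ideals inside `J(R)`
are small.
-/

section SemilinearMap

variable {R S M N : Type*} [Ring R] [Ring S] [AddCommGroup M] [AddCommGroup N] [Module R M]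
  [Module S N] {σ : R →+* S} [RingHomSurjective σ] {f : M →ₛₗ[σ] N}
  {T : Submodule R M} {C : Submodule S N}

theorem sup_comap_eq_top_of_codisjoint_map (hf : Function.Surjective f)
    (h : Codisjoint (T.map f) C) : T ⊔ C.comap f = ⊤ := by
  have hker : LinearMap.ker f ≤ T ⊔ C.comap f := (LinearMap.ker_le_comap f).trans le_sup_right
  rw [← Submodule.comap_map_eq_self hker, Submodule.map_sup,
    Submodule.map_comap_eq_of_surjective hf, h.eq_top, Submodule.comap_top]

theorem inf_comap_le_ker_of_disjoint_map (h : Disjoint (T.map f) C) :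
    T ⊓ C.comap f ≤ LinearMap.ker f :=
  fun _ hx => Submodule.disjoint_def.1 h _ (Submodule.mem_map_of_mem hx.1) hx.2

end SemilinearMap

/-- A ring homomorphism `f : R →+* S` as a map of right modules. The right module `S` is encoded as
the left regular module of `Sᵐᵒᵖ`, so that semisimplicity of the ring `Sᵐᵒᵖ` applies to it. -/
def rightSemilinearMap {R S : Type*} [Semiring R] [Semiring S] (f : R →+* S) :
    R →ₛₗ[RingHom.op f] Sᵐᵒᵖ where
  toFun x := MulOpposite.op (f x)
  map_add' x y := congrArg MulOpposite.op (map_add f x y)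
  map_smul' r x := congrArg MulOpposite.op (map_mul f x r.unop)

section Ring

variable {R : Type*} [Ring R]

theorem isSemisimpleModule_quotient_iff_isSemisimpleRing (I : Ideal R) [I.IsTwoSided] :
    IsSemisimpleModule R (R ⧸ I) ↔ IsSemisimpleRing (R ⧸ I) :=
  let e : (R ⧸ I) →ₛₗ[Ideal.Quotient.mk I] (R ⧸ I) :=
    { AddMonoidHom.id (R ⧸ I) with map_smul' := fun _ x => Quotient.inductionOn' x fun _ => rfl }
  e.isSemisimpleModule_iff_of_bijective Function.bijective_id

theorem isUnit_of_sub_one_mem_jacobson {r : R} (hr : r - 1 ∈ Ideal.jacobson (⊥ : Ideal R)) :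
    IsUnit r := by
  have exists_left_inv {a : R} (ha : a - 1 ∈ Ideal.jacobson (⊥ : Ideal R)) : ∃ b, b * a = 1 := by
    simpa only [Ideal.mem_bot, sub_eq_zero] using
      Ideal.exists_mul_sub_mem_of_sub_one_mem_jacobson a ha
  obtain ⟨s, hsr⟩ := exists_left_inv hr
  have hs : s - 1 ∈ Ideal.jacobson (⊥ : Ideal R) := by
    have : s - 1 = -(s * (r - 1)) := by rw [mul_sub, hsr, mul_one, neg_sub]
    exact this ▸ neg_mem (Ideal.mul_mem_left _ s hr)
  obtain ⟨t, hts⟩ := exists_left_inv hs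
  have htr : t = r := left_inv_eq_right_inv hts hsr
  exact isUnit_iff_exists.2 ⟨s, htr ▸ hts, hsr⟩

theorem rightIdeal_eq_top_of_mul_eq_one {K : Submodule Rᵐᵒᵖ R} {k u : R} (hk : k ∈ K)
    (hku : k * u = 1) : K = ⊤ := by
  refine eq_top_iff.2 fun x _ => ?_
  have : k * (u * x) ∈ K := K.smul_mem (MulOpposite.op (u * x)) hk
  rwa [← mul_assoc, hku, one_mul] at this

theorem isSmallRightIdeal_of_subset_jacobson {I : Submodule Rᵐᵒᵖ R}
    (hI : (I : Set R) ⊆ Ideal.jacobson (⊥ : Ideal R)) : IsSmallRightIdeal R I := by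
  intro K hK hIK
  obtain ⟨j, hj, k, hk, hjk⟩ := Submodule.mem_sup.1 (hIK ▸ Submodule.mem_top : (1 : R) ∈ I ⊔ K)
  have hkJ : k - 1 ∈ Ideal.jacobson (⊥ : Ideal R) := by
    rw [← hjk, sub_add_cancel_right]
    exact neg_mem (hI hj)
  obtain ⟨u, hku⟩ := (isUnit_of_sub_one_mem_jacobson hkJ).exists_right_inv
  exact hK (rightIdeal_eq_top_of_mul_eq_one hk hku)

theorem IsSemilocalRing.hasWeakSupplementRight (h : IsSemilocalRing R)
    (T : Submodule Rᵐᵒᵖ R) : HasWeakSupplementRight R T := by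
  let J := Ideal.jacobson (⊥ : Ideal R)
  let q := Ideal.Quotient.mk J
  have hq : Function.Surjective q := Ideal.Quotient.mk_surjective
  have : IsSemisimpleRing (R ⧸ J) := (isSemisimpleModule_quotient_iff_isSemisimpleRing J).1 h
  let f := rightSemilinearMap q
  have hf : Function.Surjective f := MulOpposite.op_surjective.comp hq
  have : RingHomSurjective (RingHom.op q) :=
    ⟨MulOpposite.op_surjective.comp (hq.comp MulOpposite.unop_surjective)⟩
  obtain ⟨C, hC⟩ := exists_isCompl (T.map f)
  refine ⟨C.comap f, sup_comap_eq_top_of_codisjoint_map hf hC.codisjoint,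
    isSmallRightIdeal_of_subset_jacobson fun x hx => ?_⟩
  have hfx : MulOpposite.op (q x) = 0 := inf_comap_le_ker_of_disjoint_map hC.disjoint hx
  exact Ideal.Quotient.eq_zero_iff_mem.1 ((MulOpposite.op_eq_zero_iff _).1 hfx)

theorem subset_rAnn_lAnn (X : Set R) : X ⊆ rAnn R (lAnn R X) :=
  fun x hx _ ha => ha x hx

theorem mul_mem_rAnn_lAnn {X Y : Set R} {k x : R} (hk : ∀ y ∈ X, k * y ∈ Y)
    (hx : x ∈ rAnn R (lAnn R X)) : k * x ∈ rAnn R (lAnn R Y) := by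
  intro a ha
  have hak : a * k ∈ lAnn R X := fun y hy => by rw [mul_assoc, ha _ (hk y hy)]
  rw [← mul_assoc, hx _ hak]

variable {T K : Submodule Rᵐᵒᵖ R}

theorem rAnn_lAnn_subset_add_rAnn_lAnn_inf (htop : T ⊔ K = ⊤) :
    rAnn R (lAnn R (T : Set R)) ⊆
      (T : Set R) + rAnn R (lAnn R ((T ⊓ K : Submodule Rᵐᵒᵖ R) : Set R)) := by
  intro x hx
  obtain ⟨t, ht, k, hk, htk⟩ := Submodule.mem_sup.1 (htop ▸ Submodule.mem_top : (1 : R) ∈ T ⊔ K)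
  have ht_mul (y : R) : t * y ∈ T := T.smul_mem (MulOpposite.op y) ht
  have hk_mul (y : R) : k * y ∈ K := K.smul_mem (MulOpposite.op y) hk
  have hsplit (y : R) : t * y + k * y = y := by rw [← add_mul, htk, one_mul]
  have hk_maps : ∀ y ∈ T, k * y ∈ T ⊓ K := fun y hy =>
    ⟨eq_sub_of_add_eq' (hsplit y) ▸ T.sub_mem hy (ht_mul y), hk_mul y⟩
  exact ⟨t * x, ht_mul x, k * x, mul_mem_rAnn_lAnn hk_maps hx, hsplit x⟩

theorem rAnn_lAnn_eq_of_sup_eq_top (htop : T ⊔ K = ⊤)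
    (hinf : rAnn R (lAnn R ((T ⊓ K : Submodule Rᵐᵒᵖ R) : Set R)) = (T ⊓ K : Submodule Rᵐᵒᵖ R)) :
    rAnn R (lAnn R (T : Set R)) = T := by
  refine Set.Subset.antisymm (fun x hx => ?_) (subset_rAnn_lAnn _)
  obtain ⟨y, hy, z, hz, rfl⟩ := rAnn_lAnn_subset_add_rAnn_lAnn_inf htop hx
  rw [hinf] at hz
  exact T.add_mem hy hz.1

end Ring

/-- A semilocal ring is right small dual iff it is right dual. -/
theorem semilocal_rightSmallDual_iff_rightDual (R : Type*) [Ring R]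
    (h : IsSemilocalRing R) : IsRightSmallDual R ↔ IsRightDual R := by
  refine ⟨fun hdual T => ?_, fun hdual I _ => hdual I⟩
  obtain ⟨K, htop, hsmall⟩ := h.hasWeakSupplementRight T
  exact rAnn_lAnn_eq_of_sup_eq_top htop (hdual _ hsmall)
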